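/- Let v₀ : ℝ → ℝ² be bounded and continuous. Define, for y = (y₁,y₂) with y₂ > 0, v(y) := ∫_ℝ G(t, y₂) v₀(y₁−t) dt and q(y) := ∫_ℝ ∇g(t, y₂) · v₀(y₁−t) dt. Then v and q are smooth on the open upper half-plane {y₂ > 0}, they satisfy the Stokes equations −Δv + ∇q = 0 and div v = 0 there, and for every y₁ ∈ ℝ, v(y₁, y₂) → v₀(y₁) as y₂ → 0⁺. -/

import Mathlib

open MeasureTheory Real Set Filter

noncomputable section

/-- Action of the Stokes Poisson kernel matrix `G(t,y₂)` on a vector `w ∈ ℝ²`: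
`G(y) = (2y₂/(π(y₁²+y₂²)²)) [[y₁², y₁y₂],[y₁y₂, y₂²]]`. -/
def Gker (t y₂ : ℝ) (w : ℝ × ℝ) : ℝ × ℝ :=
  (2 * y₂ / (Real.pi * (t ^ 2 + y₂ ^ 2) ^ 2)) •
    (t ^ 2 * w.1 + t * y₂ * w.2, t * y₂ * w.1 + y₂ ^ 2 * w.2)

/-- The pressure kernel `g(y) = −2y₂/(π(y₁²+y₂²))`. -/
def gker (y : ℝ × ℝ) : ℝ := -2 * y.2 / (Real.pi * (y.1 ^ 2 + y.2 ^ 2))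

/-- Partial derivative in the first variable. -/
def pd1 {E : Type*} [NormedAddCommGroup E] [NormedSpace ℝ E]
    (f : ℝ × ℝ → E) : ℝ × ℝ → E := fun y => fderiv ℝ f y (1, 0)

/-- Partial derivative in the second variable. -/
def pd2 {E : Type*} [NormedAddCommGroup E] [NormedSpace ℝ E]
    (f : ℝ × ℝ → E) : ℝ × ℝ → E := fun y => fderiv ℝ f y (0, 1)

/-!
Identify `ℝ²` with `ℂ`, put `z = y₁ + i y₂`, and let `ω` be the complex form of `v₀`. The kernel
splits as `G (y₁ - s, y₂) w = π⁻¹ (y₂ |s - z|⁻² w + y₂ conj ((s - z)⁻² w))`. Its first part is the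
Poisson kernel, so that it contributes `A + conj B` with `A`, `B` the Cauchy transforms of `ω` and
`conj ω`; as `A' = (2 π i)⁻¹ ∫ (s - z)⁻² ω`, the second part contributes `y₂ conj (2 i A')`, and
`∇g` is such that `q = Re (-4 A')`. A field `A + conj B + y₂ conj C` with `A`, `B`, `C` analytic has
Laplacian `conj (2 i C')` and divergence `2 Re A' - Im C`, which for `C = 2 i A'` are exactly the
gradient of `Re (-4 A')` and zero. At the boundary, both parts of the kernel are dilations of an
`O((1 + t²)⁻¹)` profile: the first of total mass `1`, the second of total mass `0`.
-/

section StokesHalfPlane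

open Complex ComplexConjugate Topology

theorem one_add_sq_le_mul_norm_ofReal_sub_sq {δ : ℝ} (hδ : 0 < δ) {z : ℂ} {s : ℝ}
    (hs : δ ≤ ‖(s : ℂ) - z‖) :
    1 + s ^ 2 ≤ (2 + (1 + 2 * ‖z‖ ^ 2) / δ ^ 2) * ‖(s : ℂ) - z‖ ^ 2 := by
  have htri : |s| ≤ ‖(s : ℂ) - z‖ + ‖z‖ := by
    simpa using norm_add_le ((s : ℂ) - z) z
  have hs_sq : s ^ 2 ≤ (‖(s : ℂ) - z‖ + ‖z‖) ^ 2 := sq_le_sq.2 (htri.trans (le_abs_self _))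
  have hconst : 1 + 2 * ‖z‖ ^ 2 ≤ (1 + 2 * ‖z‖ ^ 2) / δ ^ 2 * ‖(s : ℂ) - z‖ ^ 2 := by
    rw [div_mul_eq_mul_div, le_div_iff₀ (by positivity)]
    gcongr
  nlinarith [sq_nonneg (‖(s : ℂ) - z‖ - ‖z‖)]

theorem abs_im_le_norm_ofReal_sub (z : ℂ) (s : ℝ) : |z.im| ≤ ‖(s : ℂ) - z‖ := by
  simpa using abs_im_le_norm ((s : ℂ) - z)

theorem ofReal_sub_ne_zero {z : ℂ} (hz : z.im ≠ 0) (s : ℝ) : (s : ℂ) - z ≠ 0 :=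
  norm_pos_iff.1 ((abs_pos.2 hz).trans_le (abs_im_le_norm_ofReal_sub z s))

theorem continuous_inv_ofReal_sub {z : ℂ} (hz : z.im ≠ 0) :
    Continuous fun s : ℝ ↦ ((s : ℂ) - z)⁻¹ :=
  (continuous_ofReal.sub continuous_const).inv₀ (ofReal_sub_ne_zero hz)

theorem exists_norm_ofReal_sub_sq_inv_le {z : ℂ} (hz : z.im ≠ 0) :
    ∃ C, ∀ s : ℝ, (‖(s : ℂ) - z‖ ^ 2)⁻¹ ≤ C * (1 + s ^ 2)⁻¹ := by
  refine ⟨2 + (1 + 2 * ‖z‖ ^ 2) / |z.im| ^ 2, fun s ↦ ?_⟩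
  have hpos : 0 < ‖(s : ℂ) - z‖ := norm_pos_iff.2 (ofReal_sub_ne_zero hz s)
  rw [← div_eq_mul_inv, le_div_iff₀ (by positivity), inv_mul_le_iff₀ (by positivity), mul_comm]
  exact one_add_sq_le_mul_norm_ofReal_sub_sq (abs_pos.2 hz) (abs_im_le_norm_ofReal_sub z s)

theorem norm_ofReal_sub_sq (z : ℂ) (s : ℝ) : ‖(s : ℂ) - z‖ ^ 2 = (z.re - s) ^ 2 + z.im ^ 2 := by
  rw [Complex.sq_norm, normSq_apply]
  simp only [sub_re, ofReal_re, sub_im, ofReal_im]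
  ring

theorem inv_one_add_dilation_sq {z : ℂ} (hz : z.im ≠ 0) (s : ℝ) :
    (1 + (z.im⁻¹ * (z.re - s)) ^ 2)⁻¹ = z.im ^ 2 * (‖(s : ℂ) - z‖ ^ 2)⁻¹ := by
  rw [norm_ofReal_sub_sq]
  field_simp
  rw [add_comm]

section PoissonData

variable {𝕜 E : Type*} [RCLike 𝕜] [NormedAddCommGroup E] [NormedSpace ℝ E] [NormedSpace 𝕜 E]
  {f : ℝ → E}

theorem norm_smul_le_of_norm_le_inv_one_add_sq {k : 𝕜} {C s : ℝ}
    (hk : ‖k‖ ≤ C * (1 + s ^ 2)⁻¹) (w : E) : ‖k • w‖ ≤ C * ‖(1 + s ^ 2)⁻¹ • w‖ := by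
  rw [norm_smul, norm_smul, ← mul_assoc, Real.norm_of_nonneg (by positivity)]
  gcongr

/-- Integrability against the weight `(1 + s²)⁻¹`: the largest class of boundary data whose
Poisson integral on the upper half-plane converges absolutely. -/
def PoissonIntegrable (f : ℝ → E) : Prop := Integrable fun s ↦ (1 + s ^ 2)⁻¹ • f s

theorem poissonIntegrable_of_norm_le (hf : AEStronglyMeasurable f) {B : ℝ}
    (hB : ∀ s, ‖f s‖ ≤ B) : PoissonIntegrable f :=
  integrable_inv_one_add_sq.smul_bdd B hf (.of_forall hB)

namespace PoissonIntegrable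

theorem aestronglyMeasurable (hf : PoissonIntegrable f) : AEStronglyMeasurable f := by
  have hweight : Continuous fun s : ℝ ↦ 1 + s ^ 2 := by fun_prop
  refine (hweight.aestronglyMeasurable.smul hf.1).congr (.of_forall fun s ↦ ?_)
  exact smul_inv_smul₀ (by positivity) (f s)

theorem indicator (hf : PoissonIntegrable f) {t : Set ℝ} (ht : MeasurableSet t) :
    PoissonIntegrable (t.indicator f) := by
  simpa only [PoissonIntegrable, ← indicator_smul] using Integrable.indicator hf ht

theorem clm_comp {F : Type*} [NormedAddCommGroup F] [NormedSpace ℝ F] (L : E →L[ℝ] F)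
    (hf : PoissonIntegrable f) : PoissonIntegrable fun s ↦ L (f s) := by
  simpa only [PoissonIntegrable, map_smul] using L.integrable_comp hf

theorem conj_comp {f : ℝ → ℂ} (hf : PoissonIntegrable f) : PoissonIntegrable fun s ↦ conj (f s) :=
  hf.clm_comp (conjCLE : ℂ →L[ℝ] ℂ)

theorem integrable_smul (hf : PoissonIntegrable f) {k : ℝ → 𝕜} (hk : AEStronglyMeasurable k)
    {C : ℝ} (hC : ∀ s, ‖k s‖ ≤ C * (1 + s ^ 2)⁻¹) : Integrable fun s ↦ k s • f s :=
  (hf.norm.const_mul C).mono' (hk.smul hf.aestronglyMeasurable)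
    (.of_forall fun s ↦ norm_smul_le_of_norm_le_inv_one_add_sq (hC s) (f s))

theorem symm_comp {f : ℝ → ℝ × ℝ} (hf : PoissonIntegrable f) :
    PoissonIntegrable fun s ↦ equivRealProdCLM.symm (f s) :=
  hf.clm_comp (equivRealProdCLM.symm : ℝ × ℝ →L[ℝ] ℂ)

end PoissonIntegrable

end PoissonData

section Dilation

variable {𝕜 E : Type*} [RCLike 𝕜] [NormedAddCommGroup E] [NormedSpace ℝ E] [NormedSpace 𝕜 E]
  {φ : ℝ → 𝕜} {f : ℝ → E} {x : ℝ}

theorem integral_dilation_eq (φ : ℝ → 𝕜) (f : ℝ → E) (x : ℝ) {y : ℝ} (hy : 0 < y) :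
    ∫ s, y⁻¹ • φ (y⁻¹ * (x - s)) • f s = ∫ t, φ t • f (x - y * t) := by
  have hscale := Measure.integral_comp_mul_left (fun r ↦ φ (y⁻¹ * r) • f (x - r)) y
  simp only [inv_mul_cancel_left₀ hy.ne', abs_of_pos (inv_pos.2 hy)] at hscale
  rw [hscale, integral_smul,
    ← integral_sub_left_eq_self (fun s ↦ φ (y⁻¹ * (x - s)) • f s) volume x]
  simp only [sub_sub_cancel]

theorem tendsto_integral_dilation_of_norm_le [CompleteSpace E] (hφ : Integrable φ)
    (hf : AEStronglyMeasurable f) {B : ℝ} (hB : ∀ s, ‖f s‖ ≤ B) (hx : ContinuousAt f x) :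
    Tendsto (fun y ↦ ∫ s, y⁻¹ • φ (y⁻¹ * (x - s)) • f s) (𝓝[>] 0) (𝓝 ((∫ t, φ t) • f x)) := by
  rw [← integral_smul_const]
  refine Tendsto.congr' (eventually_mem_nhdsWithin.mono fun y hy ↦
    (integral_dilation_eq φ f x hy).symm) ?_
  refine tendsto_integral_filter_of_dominated_convergence (fun t ↦ ‖φ t‖ * B) ?_
    (.of_forall fun y ↦ .of_forall fun t ↦ ?_) (hφ.norm.mul_const B) (.of_forall fun t ↦ ?_)
  · filter_upwards [self_mem_nhdsWithin] with y hy
    have hshift := hf.comp_measurePreserving (Measure.measurePreserving_sub_left volume x)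
    exact hφ.1.smul (hshift.comp_quasiMeasurePreserving
      (Measure.quasiMeasurePreserving_smul volume (ne_of_gt hy)))
  · rw [norm_smul]
    exact mul_le_mul_of_nonneg_left (hB _) (norm_nonneg _)
  · have hline : Tendsto (fun y : ℝ ↦ x - y * t) (𝓝[>] 0) (𝓝 x) :=
      tendsto_nhdsWithin_of_tendsto_nhds (Continuous.tendsto' (by fun_prop) _ _ (by simp))
    exact (hx.tendsto.comp hline).const_smul (φ t)

theorem norm_dilation_le {K : ℝ} (hφK : ∀ t, ‖φ t‖ ≤ K * (1 + t ^ 2)⁻¹) {δ : ℝ} (hδ : 0 < δ)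
    {s y : ℝ} (hy : 0 < y) (hs : δ ≤ |s - x|) :
    ‖φ (y⁻¹ * (x - s))‖ ≤
      y ^ 2 * (K * (2 + (1 + 2 * x ^ 2) / δ ^ 2)) * (1 + s ^ 2)⁻¹ := by
  have hK : 0 ≤ K := by simpa using (norm_nonneg _).trans (hφK 0)
  have hweight : 1 + s ^ 2 ≤ (2 + (1 + 2 * x ^ 2) / δ ^ 2) * (s - x) ^ 2 := by
    simpa [← ofReal_sub] using one_add_sq_le_mul_norm_ofReal_sub_sq hδ (z := (x : ℂ))
      (by simpa [← ofReal_sub] using hs)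
  have hsx : 0 < (s - x) ^ 2 := sq_abs (s - x) ▸ pow_pos (hδ.trans_le hs) 2
  calc ‖φ (y⁻¹ * (x - s))‖ ≤ K * (1 + (y⁻¹ * (x - s)) ^ 2)⁻¹ := hφK _
    _ ≤ K * (y⁻¹ ^ 2 * (s - x) ^ 2)⁻¹ := by
      gcongr
      nlinarith
    _ = y ^ 2 * K * ((s - x) ^ 2)⁻¹ := by field_simp
    _ ≤ y ^ 2 * K * ((2 + (1 + 2 * x ^ 2) / δ ^ 2) * (1 + s ^ 2)⁻¹) := by
      gcongr
      rwa [← div_eq_mul_inv, inv_le_comm₀ hsx (by positivity), inv_div,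
        div_le_iff₀' (by positivity)]
    _ = _ := by ring

theorem tendsto_integral_dilation_of_eventuallyEq_zero {K : ℝ}
    (hφK : ∀ t, ‖φ t‖ ≤ K * (1 + t ^ 2)⁻¹) (hf : PoissonIntegrable f) (hx : f =ᶠ[𝓝 x] 0) :
    Tendsto (fun y ↦ ∫ s, y⁻¹ • φ (y⁻¹ * (x - s)) • f s) (𝓝[>] 0) (𝓝 0) := by
  obtain ⟨δ, hδ, hfδ⟩ := Metric.eventually_nhds_iff_ball.1 hx
  set C := K * (2 + (1 + 2 * x ^ 2) / δ ^ 2)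
  have hbound {y : ℝ} (hy : 0 < y) (s : ℝ) :
      ‖y⁻¹ • φ (y⁻¹ * (x - s)) • f s‖ ≤ y * C * ‖(1 + s ^ 2)⁻¹ • f s‖ := by
    by_cases hs : s ∈ Metric.ball x δ
    · simp [hfδ s hs]
    · have h := norm_smul_le_of_norm_le_inv_one_add_sq
        (norm_dilation_le hφK hδ hy (by simpa [Real.dist_eq] using hs)) (f s)
      rw [norm_smul, Real.norm_of_nonneg (by positivity), inv_mul_le_iff₀ hy]
      exact h.trans_eq (by ring)
  have hlim : Tendsto (fun y ↦ y * C * ∫ s, ‖(1 + s ^ 2)⁻¹ • f s‖) (𝓝[>] 0) (𝓝 0) :=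
    tendsto_nhdsWithin_of_tendsto_nhds (Continuous.tendsto' (by fun_prop) _ _ (by simp))
  refine squeeze_zero_norm' (eventually_mem_nhdsWithin.mono fun y hy ↦ ?_) hlim
  rw [← integral_const_mul]
  exact norm_integral_le_of_norm_le (hf.norm.const_mul _) (.of_forall (hbound hy))

theorem integrable_dilation_smul {K : ℝ} (hφ : Measurable φ)
    (hφK : ∀ t, ‖φ t‖ ≤ K * (1 + t ^ 2)⁻¹) (hf : PoissonIntegrable f) (x : ℝ) {y : ℝ}
    (hy : 0 < y) : Integrable fun s ↦ y⁻¹ • φ (y⁻¹ * (x - s)) • f s := by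
  have hK : 0 ≤ K := by simpa using (norm_nonneg _).trans (hφK 0)
  obtain ⟨C, hC⟩ := exists_norm_ofReal_sub_sq_inv_le (z := ⟨x, y⟩) hy.ne'
  have hmeas : Measurable fun s ↦ φ (y⁻¹ * (x - s)) := hφ.comp (by fun_prop)
  have hbound (s : ℝ) : ‖φ (y⁻¹ * (x - s))‖ ≤ K * (y ^ 2 * C) * (1 + s ^ 2)⁻¹ := by
    calc ‖φ (y⁻¹ * (x - s))‖ ≤ K * (1 + (y⁻¹ * (x - s)) ^ 2)⁻¹ := hφK _
      _ = K * (y ^ 2 * (‖(s : ℂ) - ⟨x, y⟩‖ ^ 2)⁻¹) := by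
        rw [inv_one_add_dilation_sq (z := ⟨x, y⟩) hy.ne']
      _ ≤ K * (y ^ 2 * (C * (1 + s ^ 2)⁻¹)) := by gcongr; exact hC s
      _ = K * (y ^ 2 * C) * (1 + s ^ 2)⁻¹ := by ring
  exact (hf.integrable_smul hmeas.aestronglyMeasurable hbound).smul y⁻¹

theorem tendsto_integral_dilation [CompleteSpace E] {K : ℝ} (hφ : Measurable φ)
    (hφK : ∀ t, ‖φ t‖ ≤ K * (1 + t ^ 2)⁻¹) (hf : PoissonIntegrable f) (hx : ContinuousAt f x) :
    Tendsto (fun y ↦ ∫ s, y⁻¹ • φ (y⁻¹ * (x - s)) • f s) (𝓝[>] 0) (𝓝 ((∫ t, φ t) • f x)) := by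
  obtain ⟨δ, hδ, hfδ⟩ := Metric.eventually_nhds_iff_ball.1
    (hx.norm.eventually_lt_const (lt_add_one ‖f x‖))
  -- Near `x` the data are bounded, so dominated convergence applies; the rest vanishes near `x`.
  set U := Metric.ball x δ
  have hU : MeasurableSet U := measurableSet_ball
  have hxU : U ∈ 𝓝 x := Metric.ball_mem_nhds x hδ
  have hnear_eq : U.indicator f =ᶠ[𝓝 x] f := mem_of_superset hxU fun s hs ↦ indicator_of_mem hs f
  have hfar_eq : Uᶜ.indicator f =ᶠ[𝓝 x] 0 :=
    mem_of_superset hxU fun s hs ↦ indicator_of_notMem (not_not_intro hs) f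
  have hbound (s : ℝ) : ‖U.indicator f s‖ ≤ ‖f x‖ + 1 := by
    by_cases hs : s ∈ U
    · simpa [hs] using (hfδ s hs).le
    · simpa [hs] using add_nonneg (norm_nonneg (f x)) zero_le_one
  have hφint : Integrable φ := (integrable_inv_one_add_sq.const_mul K).mono'
    hφ.aestronglyMeasurable (.of_forall hφK)
  have hnear := tendsto_integral_dilation_of_norm_le hφint
    (hf.aestronglyMeasurable.indicator hU) hbound (hx.congr hnear_eq.symm)
  have hfar := tendsto_integral_dilation_of_eventuallyEq_zero hφK (hf.indicator hU.compl) hfar_eq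
  rw [hnear_eq.eq_of_nhds] at hnear
  refine ((hnear.add hfar).congr' (eventually_mem_nhdsWithin.mono fun y hy ↦ ?_)).trans
    (by rw [add_zero])
  rw [← integral_add (integrable_dilation_smul hφ hφK (hf.indicator hU) x hy)
    (integrable_dilation_smul hφ hφK (hf.indicator hU.compl) x hy)]
  simp only [← smul_add, indicator_self_add_compl_apply]

end Dilation

section CauchyTransform

/-- The Cauchy kernel regularised as in Nevanlinna's representation: subtracting `s / (1 + s²)`,
which does not depend on `z`, makes it decay like `(1 + s²)⁻¹`. -/
def cauchyKernel (z : ℂ) (s : ℝ) : ℂ := ((s : ℂ) - z)⁻¹ - s / (1 + s ^ 2)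

variable {E : Type*} [NormedAddCommGroup E] [NormedSpace ℂ E] {f : ℝ → E} {z : ℂ}

/-- The Cauchy integral of boundary data on the real line, for the regularised Cauchy kernel. -/
def cauchyTransform (f : ℝ → E) (z : ℂ) : E :=
  (2 * π * I : ℂ)⁻¹ • ∫ s : ℝ, cauchyKernel z s • f s

theorem one_add_ofReal_sq_ne_zero (s : ℝ) : (1 + s ^ 2 : ℂ) ≠ 0 := by
  exact_mod_cast (by positivity : (1 + s ^ 2 : ℝ) ≠ 0)

theorem norm_cauchyKernel_le (hz : z.im ≠ 0) (s : ℝ) :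
    ‖cauchyKernel z s‖ ≤
      (‖z‖ + ‖1 + z ^ 2‖ * |z.im|⁻¹) * (1 + s ^ 2)⁻¹ := by
  have hsz := ofReal_sub_ne_zero hz s
  have hs := one_add_ofReal_sq_ne_zero s
  have hkernel : cauchyKernel z s =
      (z + (1 + z ^ 2) * ((s : ℂ) - z)⁻¹) * ((1 + s ^ 2 : ℝ) : ℂ)⁻¹ := by
    rw [cauchyKernel]
    push_cast
    field_simp
    ring
  rw [hkernel, norm_mul, norm_inv, norm_real, Real.norm_of_nonneg (by positivity)]
  gcongr
  refine (norm_add_le _ _).trans ?_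
  rw [norm_mul, norm_inv]
  gcongr
  exact abs_im_le_norm_ofReal_sub z s

theorem integrable_cauchyKernel_smul (hf : PoissonIntegrable f) (hz : z.im ≠ 0) :
    Integrable fun s ↦ cauchyKernel z s • f s := by
  have hcont : Continuous fun s : ℝ ↦ cauchyKernel z s :=
    (continuous_inv_ofReal_sub hz).sub
      (continuous_ofReal.div (by fun_prop) one_add_ofReal_sq_ne_zero)
  exact hf.integrable_smul hcont.aestronglyMeasurable (norm_cauchyKernel_le hz)

theorem integrable_inv_sq_smul (hf : PoissonIntegrable f) (hz : z.im ≠ 0) :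
    Integrable fun s : ℝ ↦ (((s : ℂ) - z) ^ 2)⁻¹ • f s := by
  obtain ⟨C, hC⟩ := exists_norm_ofReal_sub_sq_inv_le hz
  have hcont : Continuous fun s : ℝ ↦ (((s : ℂ) - z) ^ 2)⁻¹ := by
    simp_rw [← inv_pow]
    exact (continuous_inv_ofReal_sub hz).pow 2
  exact hf.integrable_smul hcont.aestronglyMeasurable fun s ↦ by simpa using hC s

theorem norm_inv_sq_smul_le_of_mem_ball {w : ℂ} (hw : w ∈ Metric.ball z (|z.im| / 2))
    (f : ℝ → E) (s : ℝ) :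
    ‖(((s : ℂ) - w) ^ 2)⁻¹ • f s‖ ≤ 4 * ‖(((s : ℂ) - z) ^ 2)⁻¹ • f s‖ := by
  have hz : z.im ≠ 0 := abs_pos.1 (by linarith [Metric.pos_of_mem_ball hw])
  have hpos : 0 < ‖(s : ℂ) - z‖ := norm_pos_iff.2 (ofReal_sub_ne_zero hz s)
  have htri : ‖(s : ℂ) - z‖ ≤ ‖(s : ℂ) - w‖ + ‖w - z‖ := by
    simpa using norm_add_le ((s : ℂ) - w) (w - z)
  have hdist : ‖w - z‖ < |z.im| / 2 := by simpa [dist_eq_norm] using hw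
  have hhalf : ‖(s : ℂ) - z‖ / 2 ≤ ‖(s : ℂ) - w‖ := by
    linarith [abs_im_le_norm_ofReal_sub z s]
  rw [norm_smul, norm_smul, ← mul_assoc, norm_inv, norm_inv, norm_pow, norm_pow]
  gcongr
  calc (‖(s : ℂ) - w‖ ^ 2)⁻¹ ≤ ((‖(s : ℂ) - z‖ / 2) ^ 2)⁻¹ := by gcongr
    _ = 4 * (‖(s : ℂ) - z‖ ^ 2)⁻¹ := by field_simp; norm_num

theorem im_ne_zero_of_mem_ball {w : ℂ} (hw : w ∈ Metric.ball z (|z.im| / 2)) : w.im ≠ 0 := by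
  intro h
  have hdist : ‖w - z‖ < |z.im| / 2 := by simpa [dist_eq_norm] using hw
  have him : |z.im| ≤ ‖w - z‖ := by simpa [h] using abs_im_le_norm (w - z)
  linarith [abs_nonneg z.im]

theorem hasDerivAt_cauchyTransform (hf : PoissonIntegrable f) (hz : z.im ≠ 0) :
    HasDerivAt (cauchyTransform f)
      ((2 * π * I : ℂ)⁻¹ • ∫ s : ℝ, (((s : ℂ) - z) ^ 2)⁻¹ • f s) z := by
  have hball : Metric.ball z (|z.im| / 2) ∈ 𝓝 z := Metric.ball_mem_nhds z (by positivity)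
  have hmeas : ∀ᶠ w in 𝓝 z, AEStronglyMeasurable
      (fun s ↦ cauchyKernel w s • f s) := by
    filter_upwards [hball] with w hw
    exact (integrable_cauchyKernel_smul hf (im_ne_zero_of_mem_ball hw)).1
  have hderiv (s : ℝ) (w : ℂ) (hw : w ∈ Metric.ball z (|z.im| / 2)) :
      HasDerivAt (fun w ↦ cauchyKernel w s • f s)
        ((((s : ℂ) - w) ^ 2)⁻¹ • f s) w := by
    have hsub : HasDerivAt (fun w ↦ (s : ℂ) - w) (-1) w := (hasDerivAt_id w).const_sub (s : ℂ)
    have hinv := hsub.fun_inv (ofReal_sub_ne_zero (im_ne_zero_of_mem_ball hw) s)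
    rw [neg_neg, one_div] at hinv
    exact (hinv.sub_const _).smul_const (f s)
  exact (hasDerivAt_integral_of_dominated_loc_of_deriv_le hball hmeas
    (integrable_cauchyKernel_smul hf hz) (integrable_inv_sq_smul hf hz).1
    (.of_forall fun s w hw ↦ norm_inv_sq_smul_le_of_mem_ball hw f s)
    ((integrable_inv_sq_smul hf hz).norm.const_mul 4) (.of_forall hderiv)).2.const_smul _

theorem analyticAt_cauchyTransform [CompleteSpace E] (hf : PoissonIntegrable f) (hz : z.im ≠ 0) :
    AnalyticAt ℂ (cauchyTransform f) z := by
  have hopen : IsOpen {w : ℂ | w.im ≠ 0} := isOpen_ne_fun continuous_im continuous_const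
  refine DifferentiableOn.analyticAt (fun w hw ↦ ?_) (hopen.mem_nhds hz)
  exact (hasDerivAt_cauchyTransform hf hw).differentiableAt.differentiableWithinAt

end CauchyTransform

section PoissonIntegral

/-- The Poisson integral of boundary data on the real line, evaluated in the upper half-plane. -/
def poissonIntegral {E : Type*} [NormedAddCommGroup E] [NormedSpace ℝ E] (f : ℝ → E) (z : ℂ) : E :=
  π⁻¹ • ∫ s : ℝ, (z.im / ‖(s : ℂ) - z‖ ^ 2) • f s

theorem integrable_poissonKernel_smul {E : Type*} [NormedAddCommGroup E] [NormedSpace ℝ E]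
    {f : ℝ → E} (hf : PoissonIntegrable f) {z : ℂ} (hz : z.im ≠ 0) :
    Integrable fun s : ℝ ↦ (z.im / ‖(s : ℂ) - z‖ ^ 2) • f s := by
  obtain ⟨C, hC⟩ := exists_norm_ofReal_sub_sq_inv_le hz
  have hmeas : Measurable fun s : ℝ ↦ z.im / ‖(s : ℂ) - z‖ ^ 2 := by fun_prop
  refine hf.integrable_smul hmeas.aestronglyMeasurable (C := |z.im| * C) fun s ↦ ?_
  rw [norm_div, norm_pow, norm_norm, Real.norm_eq_abs, div_eq_mul_inv, mul_assoc]
  gcongr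
  exact hC s

theorem cauchyKernel_sub_conj (z : ℂ) (s : ℝ) :
    cauchyKernel z s - conj (cauchyKernel z s) =
      2 * I * ↑(z.im / ‖(s : ℂ) - z‖ ^ 2) := by
  have him : (cauchyKernel z s).im = z.im / ‖(s : ℂ) - z‖ ^ 2 := by
    have hreal : ((s : ℂ) / (1 + s ^ 2)).im = 0 := by
      exact_mod_cast ofReal_im (s / (1 + s ^ 2))
    rw [cauchyKernel, sub_im, inv_im, hreal, ← Complex.sq_norm]
    simp
  rw [sub_conj, him]
  push_cast
  ring

theorem cauchyTransform_add_conj_eq_poissonIntegral {f : ℝ → ℂ} (hf : PoissonIntegrable f) {z : ℂ}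
    (hz : z.im ≠ 0) :
    cauchyTransform f z + conj (cauchyTransform (fun s ↦ conj (f s)) z) = poissonIntegral f z := by
  have hconj : conj (∫ s, cauchyKernel z s • conj (f s)) =
      ∫ s, conj (cauchyKernel z s) • f s := by
    rw [← integral_conj]
    simp only [smul_eq_mul, map_mul, conj_conj]
  have hint := integrable_cauchyKernel_smul hf hz
  have hint_conj : Integrable fun s ↦ conj (cauchyKernel z s) • f s := by
    simpa using (conjCLE : ℂ →L[ℝ] ℂ).integrable_comp (integrable_cauchyKernel_smul hf.conj_comp hz)
  have hscalar : conj (2 * π * I : ℂ)⁻¹ = -(2 * π * I : ℂ)⁻¹ := by simp [Complex.conj_ofNat]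
  calc cauchyTransform f z + conj (cauchyTransform (fun s ↦ conj (f s)) z)
    _ = (2 * π * I : ℂ)⁻¹ • ∫ s, (2 * I * ↑(z.im / ‖(s : ℂ) - z‖ ^ 2)) • f s := by
      simp_rw [← cauchyKernel_sub_conj, sub_smul]
      rw [integral_sub hint hint_conj, ← hconj, cauchyTransform, cauchyTransform, smul_sub,
        smul_eq_mul (_⁻¹) (∫ s, _ • conj (f s)), map_mul, hscalar, neg_mul, ← sub_eq_add_neg,
        smul_eq_mul (_⁻¹) (conj _)]
    _ = poissonIntegral f z := by
      simp_rw [mul_smul, integral_smul, coe_smul, poissonIntegral]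
      rw [real_smul, ofReal_inv, smul_eq_mul, smul_eq_mul, smul_eq_mul]
      field_simp [I_ne_zero, pi_ne_zero]

end PoissonIntegral

section BoundaryValues

variable {E : Type*} [NormedAddCommGroup E] {f : ℝ → E} {x : ℝ}

theorem tendsto_poissonIntegral [NormedSpace ℝ E] [CompleteSpace E] (hf : PoissonIntegrable f)
    (hx : ContinuousAt f x) :
    Tendsto (fun y : ℝ ↦ poissonIntegral f ⟨x, y⟩) (𝓝[>] 0) (𝓝 (f x)) := by
  have hlim := (tendsto_integral_dilation (φ := fun t : ℝ ↦ (1 + t ^ 2)⁻¹) (K := 1) (by fun_prop)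
    (fun t ↦ by rw [Real.norm_of_nonneg (by positivity), one_mul]) hf hx).const_smul π⁻¹
  rw [integral_univ_inv_one_add_sq, inv_smul_smul₀ pi_ne_zero] at hlim
  refine hlim.congr' (eventually_mem_nhdsWithin.mono fun y (hy : 0 < y) ↦ ?_)
  simp only [poissonIntegral]
  congr with s
  rw [inv_one_add_dilation_sq (z := ⟨x, y⟩) hy.ne', ← mul_smul]
  congr 1
  field_simp

theorem norm_inv_add_I_sq (t : ℝ) : ‖(((t : ℂ) + I) ^ 2)⁻¹‖ = (1 + t ^ 2)⁻¹ := by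
  have hnorm := norm_ofReal_sub_sq (-I) t
  simp only [sub_neg_eq_add, neg_re, neg_im, I_re, I_im] at hnorm
  rw [norm_inv, norm_pow, hnorm]
  ring

theorem integral_inv_add_I_sq : ∫ t : ℝ, (((t : ℂ) + I) ^ 2)⁻¹ = 0 := by
  have hne (t : ℝ) : (t : ℂ) + I ≠ 0 := by
    simpa using ofReal_sub_ne_zero (z := -I) (by simp) t
  have hderiv (t : ℝ) : HasDerivAt (fun t : ℝ ↦ -((t : ℂ) + I)⁻¹) (((t : ℂ) + I) ^ 2)⁻¹ t := by
    have h := (((hasDerivAt_id t).ofReal_comp.add_const I).fun_inv (hne t)).fun_neg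
    simpa [neg_div] using h
  have hint : Integrable fun t : ℝ ↦ (((t : ℂ) + I) ^ 2)⁻¹ :=
    integrable_inv_one_add_sq.mono' (by fun_prop) (.of_forall fun t ↦ (norm_inv_add_I_sq t).le)
  have hlim : Tendsto (fun t : ℝ ↦ -((t : ℂ) + I)⁻¹) (cocompact ℝ) (𝓝 0) := by
    have hline := ((Homeomorph.addRight I).isClosedEmbedding.comp
      isometry_ofReal.isClosedEmbedding).tendsto_cocompact
    rw [← Metric.cobounded_eq_cocompact (α := ℂ)] at hline
    simpa using (tendsto_inv₀_cobounded.comp hline).neg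
  simpa using integral_of_hasDerivAt_of_tendsto hderiv hint (hlim.mono_left atBot_le_cocompact)
    (hlim.mono_left atTop_le_cocompact)

theorem tendsto_im_smul_integral_inv_sq_smul [NormedSpace ℂ E] [CompleteSpace E]
    (hf : PoissonIntegrable f) (hx : ContinuousAt f x) :
    Tendsto (fun y : ℝ ↦ y • ∫ s : ℝ, (((s : ℂ) - ⟨x, y⟩) ^ 2)⁻¹ • f s) (𝓝[>] 0) (𝓝 0) := by
  have hlim := tendsto_integral_dilation (φ := fun t : ℝ ↦ (((t : ℂ) + I) ^ 2)⁻¹) (K := 1)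
    (by fun_prop) (fun t ↦ by rw [norm_inv_add_I_sq, one_mul]) hf hx
  rw [integral_inv_add_I_sq, zero_smul] at hlim
  refine hlim.congr' (eventually_mem_nhdsWithin.mono fun y (hy : 0 < y) ↦ ?_)
  simp only [← integral_smul]
  congr with s
  have hy' : (y : ℂ) ≠ 0 := ofReal_ne_zero.2 hy.ne'
  have hkernel : ((y⁻¹ * (x - s) : ℝ) : ℂ) + I = -(y : ℂ)⁻¹ * ((s : ℂ) - ⟨x, y⟩) := by
    rw [mk_eq_add_mul_I]
    push_cast
    field_simp
    ring
  rw [hkernel, ← coe_smul, ← coe_smul, ← mul_smul, ← mul_smul]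
  congr 1
  push_cast
  field_simp

end BoundaryValues

section PartialDerivatives

variable {E : Type*} [NormedAddCommGroup E] [NormedSpace ℝ E] {f g : ℝ × ℝ → E} {y : ℝ × ℝ}

theorem pd1_congr (h : f =ᶠ[𝓝 y] g) : pd1 f =ᶠ[𝓝 y] pd1 g :=
  h.fderiv.fun_comp fun L ↦ L (1, 0)

theorem pd2_congr (h : f =ᶠ[𝓝 y] g) : pd2 f =ᶠ[𝓝 y] pd2 g :=
  h.fderiv.fun_comp fun L ↦ L (0, 1)

end PartialDerivatives

section AnalyticCompSymm

variable {F : ℂ → ℂ} {y : ℝ × ℝ}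

theorem eventually_analyticAt_symm (hF : AnalyticAt ℂ F (equivRealProdCLM.symm y)) :
    ∀ᶠ x in 𝓝 y, AnalyticAt ℂ F (equivRealProdCLM.symm x) :=
  equivRealProdCLM.symm.continuous.continuousAt.eventually hF.eventually_analyticAt

theorem contDiffAt_comp_symm {n : WithTop ℕ∞} (hF : AnalyticAt ℂ F (equivRealProdCLM.symm y)) :
    ContDiffAt ℝ n (fun y ↦ F (equivRealProdCLM.symm y)) y :=
  (hF.contDiffAt.restrict_scalars ℝ).comp y equivRealProdCLM.symm.contDiff.contDiffAt

theorem contDiffAt_re_comp_symm {n : WithTop ℕ∞} (hF : AnalyticAt ℂ F (equivRealProdCLM.symm y)) :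
    ContDiffAt ℝ n (fun y ↦ (F (equivRealProdCLM.symm y)).re) y :=
  reCLM.contDiff.contDiffAt.comp y (contDiffAt_comp_symm hF)

theorem fderiv_re_comp_symm_apply
    (hF : DifferentiableAt ℂ F (equivRealProdCLM.symm y)) (h : ℝ × ℝ) :
    fderiv ℝ (fun y ↦ (F (equivRealProdCLM.symm y)).re) y h =
      (equivRealProdCLM.symm h * deriv F (equivRealProdCLM.symm y)).re := by
  have hcomp : HasFDerivAt (fun y ↦ (F (equivRealProdCLM.symm y)).re) _ y :=
    reCLM.hasFDerivAt.comp y ((hF.hasDerivAt.hasFDerivAt.restrictScalars ℝ).comp y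
      equivRealProdCLM.symm.hasFDerivAt)
  rw [hcomp.fderiv]
  rfl

theorem gradient_re_comp_symm (hF : DifferentiableAt ℂ F (equivRealProdCLM.symm y)) :
    (pd1 (fun y ↦ (F (equivRealProdCLM.symm y)).re) y,
      pd2 (fun y ↦ (F (equivRealProdCLM.symm y)).re) y) =
      equivRealProdCLM (conj (deriv F (equivRealProdCLM.symm y))) := by
  have hone : equivRealProdCLM.symm (1, 0) = 1 := rfl
  have hI : equivRealProdCLM.symm (0, 1) = I := rfl
  simp [pd1, pd2, fderiv_re_comp_symm_apply hF, hone, hI]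

end AnalyticCompSymm

section BianalyticField

variable {A B C : ℂ → ℂ} {y : ℝ × ℝ}

/-- The planar vector field with complex representation `A + conj B + (im z) conj C`. For analytic
`A`, `B`, `C` this is the Goursat form of a biharmonic field. -/
def bianalyticField (A B C : ℂ → ℂ) (y : ℝ × ℝ) : ℝ × ℝ :=
  equivRealProdCLM (A (equivRealProdCLM.symm y) + conj (B (equivRealProdCLM.symm y)) +
    y.2 * conj (C (equivRealProdCLM.symm y)))

theorem contDiffAt_bianalyticField {n : WithTop ℕ∞} (hA : AnalyticAt ℂ A (equivRealProdCLM.symm y))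
    (hB : AnalyticAt ℂ B (equivRealProdCLM.symm y))
    (hC : AnalyticAt ℂ C (equivRealProdCLM.symm y)) : ContDiffAt ℝ n (bianalyticField A B C) y := by
  have him : ContDiffAt ℝ n (fun y : ℝ × ℝ ↦ (y.2 : ℂ)) y :=
    (ofRealCLM.contDiff.comp contDiff_snd).contDiffAt
  have hconjB := conjCLE.contDiff.contDiffAt.comp y (contDiffAt_comp_symm (n := n) hB)
  have hconjC := conjCLE.contDiff.contDiffAt.comp y (contDiffAt_comp_symm (n := n) hC)
  exact equivRealProdCLM.contDiff.contDiffAt.comp y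
    (((contDiffAt_comp_symm hA).add hconjB).add (him.mul hconjC))

theorem fderiv_bianalyticField_apply (hA : DifferentiableAt ℂ A (equivRealProdCLM.symm y))
    (hB : DifferentiableAt ℂ B (equivRealProdCLM.symm y))
    (hC : DifferentiableAt ℂ C (equivRealProdCLM.symm y)) (h : ℝ × ℝ) :
    fderiv ℝ (bianalyticField A B C) y h = equivRealProdCLM
      (equivRealProdCLM.symm h * deriv A (equivRealProdCLM.symm y) +
        conj (equivRealProdCLM.symm h * deriv B (equivRealProdCLM.symm y)) +
        (y.2 * conj (equivRealProdCLM.symm h * deriv C (equivRealProdCLM.symm y)) +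
          h.2 * conj (C (equivRealProdCLM.symm y)))) := by
  have hreal {F : ℂ → ℂ} (hF : DifferentiableAt ℂ F (equivRealProdCLM.symm y)) :=
    (hF.hasDerivAt.hasFDerivAt.restrictScalars ℝ).comp y equivRealProdCLM.symm.hasFDerivAt
  have hconj {F : ℂ → ℂ} (hF : DifferentiableAt ℂ F (equivRealProdCLM.symm y)) :=
    conjCLE.hasFDerivAt.comp y (hreal hF)
  have him : HasFDerivAt (fun y : ℝ × ℝ ↦ (y.2 : ℂ)) _ y :=
    ofRealCLM.hasFDerivAt.comp y hasFDerivAt_snd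
  have hfield : HasFDerivAt (bianalyticField A B C) _ y := equivRealProdCLM.hasFDerivAt.comp y
    (((hreal hA).add (hconj hB)).add (him.mul (hconj hC)))
  rw [hfield.fderiv]
  simp only [ContinuousLinearMap.comp_apply, add_apply,
    smul_apply, ContinuousLinearMap.coe_restrictScalars',
    ContinuousLinearMap.toSpanSingleton_apply, ContinuousLinearEquiv.coe_coe, conjCLE_apply,
    ContinuousLinearMap.coe_snd', ofRealCLM_apply, smul_eq_mul]
  rw [mul_comm (h.2 : ℂ)]

theorem pd1_bianalyticField (hA : AnalyticAt ℂ A (equivRealProdCLM.symm y))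
    (hB : AnalyticAt ℂ B (equivRealProdCLM.symm y))
    (hC : AnalyticAt ℂ C (equivRealProdCLM.symm y)) :
    pd1 (bianalyticField A B C) =ᶠ[𝓝 y] bianalyticField (deriv A) (deriv B) (deriv C) := by
  have hone : equivRealProdCLM.symm (1, 0) = 1 := rfl
  filter_upwards [eventually_analyticAt_symm hA, eventually_analyticAt_symm hB,
    eventually_analyticAt_symm hC] with x hAx hBx hCx
  simp only [pd1, bianalyticField, hone, fderiv_bianalyticField_apply hAx.differentiableAt
    hBx.differentiableAt hCx.differentiableAt, one_mul, ofReal_zero, zero_mul, add_zero]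

theorem pd2_bianalyticField (hA : AnalyticAt ℂ A (equivRealProdCLM.symm y))
    (hB : AnalyticAt ℂ B (equivRealProdCLM.symm y))
    (hC : AnalyticAt ℂ C (equivRealProdCLM.symm y)) :
    pd2 (bianalyticField A B C) =ᶠ[𝓝 y]
      bianalyticField (I • deriv A) (I • deriv B + C) (I • deriv C) := by
  have hI : equivRealProdCLM.symm (0, 1) = I := rfl
  filter_upwards [eventually_analyticAt_symm hA, eventually_analyticAt_symm hB,
    eventually_analyticAt_symm hC] with x hAx hBx hCx
  simp only [pd2, bianalyticField, hI, fderiv_bianalyticField_apply hAx.differentiableAt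
    hBx.differentiableAt hCx.differentiableAt, ofReal_one, one_mul, Pi.add_apply, Pi.smul_apply,
    smul_eq_mul, map_add]
  ring_nf

theorem divergence_bianalyticField (hA : AnalyticAt ℂ A (equivRealProdCLM.symm y))
    (hB : AnalyticAt ℂ B (equivRealProdCLM.symm y))
    (hC : AnalyticAt ℂ C (equivRealProdCLM.symm y)) :
    (pd1 (bianalyticField A B C) y).1 + (pd2 (bianalyticField A B C) y).2 =
      2 * (deriv A (equivRealProdCLM.symm y)).re - (C (equivRealProdCLM.symm y)).im := by
  rw [(pd1_bianalyticField hA hB hC).eq_of_nhds, (pd2_bianalyticField hA hB hC).eq_of_nhds]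
  simp only [bianalyticField, equivRealProdCLM_apply, Pi.add_apply, Pi.smul_apply, smul_eq_mul,
    map_add, map_mul, conj_I, Prod.fst_add, Prod.snd_add, mul_re, mul_im, conj_re, conj_im, I_re,
    I_im, neg_re, neg_im, ofReal_re, ofReal_im]
  ring

theorem laplacian_bianalyticField (hA : AnalyticAt ℂ A (equivRealProdCLM.symm y))
    (hB : AnalyticAt ℂ B (equivRealProdCLM.symm y))
    (hC : AnalyticAt ℂ C (equivRealProdCLM.symm y)) :
    pd1 (pd1 (bianalyticField A B C)) y + pd2 (pd2 (bianalyticField A B C)) y =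
      equivRealProdCLM (conj (2 * I * deriv C (equivRealProdCLM.symm y))) := by
  have hpd1 := (pd1_congr (pd1_bianalyticField hA hB hC)).trans
    (pd1_bianalyticField hA.deriv hB.deriv hC.deriv)
  have hpd2 := (pd2_congr (pd2_bianalyticField hA hB hC)).trans
    (pd2_bianalyticField hA.deriv.const_smul (hB.deriv.const_smul.add hC) hC.deriv.const_smul)
  rw [hpd1.eq_of_nhds, hpd2.eq_of_nhds]
  simp only [bianalyticField, ← map_add]
  congr 1
  simp only [Pi.add_apply, Pi.smul_apply, smul_eq_mul, deriv_const_smul_field,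
    deriv_add (hB.deriv.const_smul (c := I)).differentiableAt hC.differentiableAt, map_add,
    map_mul, conj_I, Complex.conj_ofNat]
  linear_combination (deriv (deriv A) (equivRealProdCLM.symm y) +
    conj (deriv (deriv B) (equivRealProdCLM.symm y)) +
    y.2 * conj (deriv (deriv C) (equivRealProdCLM.symm y))) * I_sq

end BianalyticField

section Stokes

variable {A B : ℂ → ℂ} {y : ℝ × ℝ} {v : ℝ × ℝ → ℝ × ℝ} {q : ℝ × ℝ → ℝ}

theorem stokes_of_eventuallyEq_bianalyticField (hA : AnalyticAt ℂ A (equivRealProdCLM.symm y))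
    (hB : AnalyticAt ℂ B (equivRealProdCLM.symm y))
    (hv : v =ᶠ[𝓝 y] bianalyticField A B ((2 * I) • deriv A))
    (hq : q =ᶠ[𝓝 y] fun x ↦ (((-4 : ℂ) • deriv A) (equivRealProdCLM.symm x)).re) :
    -(pd1 (pd1 v) y + pd2 (pd2 v) y) + (pd1 q y, pd2 q y) = 0 ∧
      (pd1 v y).1 + (pd2 v y).2 = 0 := by
  have hC : AnalyticAt ℂ ((2 * I) • deriv A) (equivRealProdCLM.symm y) := hA.deriv.const_smul
  have hpd1 := pd1_congr hv
  have hpd2 := pd2_congr hv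
  constructor
  · rw [(pd1_congr hpd1).eq_of_nhds, (pd2_congr hpd2).eq_of_nhds,
      laplacian_bianalyticField hA hB hC, (pd1_congr hq).eq_of_nhds, (pd2_congr hq).eq_of_nhds,
      gradient_re_comp_symm hA.deriv.const_smul.differentiableAt, ← map_neg, ← map_add]
    have hcancel : -(2 * I * (2 * I * deriv (deriv A) (equivRealProdCLM.symm y))) +
        -4 * deriv (deriv A) (equivRealProdCLM.symm y) = 0 := by
      linear_combination -4 * deriv (deriv A) (equivRealProdCLM.symm y) * I_sq
    simp only [deriv_const_smul_field, ← map_neg, ← map_add, smul_eq_mul, hcancel, map_zero]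
  · rw [hpd1.eq_of_nhds, hpd2.eq_of_nhds, divergence_bianalyticField hA hB hC]
    simp

end Stokes

section HalfPlaneKernels

variable {f : ℝ → ℝ × ℝ}

theorem symm_Gker (z : ℂ) (s : ℝ) (w : ℝ × ℝ) :
    equivRealProdCLM.symm (Gker (z.re - s) z.im w) =
      π⁻¹ • ((z.im / ‖(s : ℂ) - z‖ ^ 2) • equivRealProdCLM.symm w +
        z.im * conj ((((s : ℂ) - z) ^ 2)⁻¹ * equivRealProdCLM.symm w)) := by
  rcases eq_or_ne z.im 0 with hz | hz
  · simp [Gker, hz]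
  have hne := ofReal_sub_ne_zero hz s
  have hnorm : (z.re - s) ^ 2 + z.im ^ 2 ≠ 0 := by positivity
  have hinv : conj (((s : ℂ) - z) ^ 2)⁻¹ =
      ((z.re - s) ^ 2 + z.im ^ 2)⁻¹ ^ 2 • ((s : ℂ) - z) ^ 2 := by
    rw [map_inv₀, map_pow, ← norm_ofReal_sub_sq, real_smul, ofReal_pow, ofReal_inv, ofReal_pow,
      ← conj_mul']
    have hne' : conj ((s : ℂ) - z) ≠ 0 := (map_ne_zero _).2 hne
    field_simp
  rw [Gker, map_mul, hinv, norm_ofReal_sub_sq]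
  generalize hN : (z.re - s) ^ 2 + z.im ^ 2 = N at hnorm ⊢
  apply Complex.ext <;>
  · simp only [equivRealProdCLM_symm_apply_re, equivRealProdCLM_symm_apply_im,
      Prod.smul_fst, Prod.smul_snd, smul_re, smul_im, add_re, add_im, mul_re, mul_im, ofReal_re,
      ofReal_im, conj_re, conj_im, sub_re, sub_im, sq, smul_eq_mul]
    field_simp
    rw [← hN]
    ring

theorem gker_eq_re (y : ℝ × ℝ) :
    gker y = ((-(2 * I / π)) * (equivRealProdCLM.symm y)⁻¹).re := by
  have hcoeff : -(2 * I / π) = (-(2 / π) : ℝ) * I := by push_cast; ring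
  rw [hcoeff, mul_assoc, re_ofReal_mul, I_mul_re, inv_im, normSq_apply]
  simp only [gker, equivRealProdCLM_symm_apply_re, equivRealProdCLM_symm_apply_im]
  field_simp

theorem fderiv_gker_apply {z : ℂ} (hz : z.im ≠ 0) (s : ℝ) (w : ℝ × ℝ) :
    fderiv ℝ gker (z.re - s, z.im) w =
      (2 * I / π * ((((s : ℂ) - z) ^ 2)⁻¹ * equivRealProdCLM.symm w)).re := by
  have hpoint : equivRealProdCLM.symm (z.re - s, z.im) = z - s := by
    apply Complex.ext <;> simp [equivRealProdCLM_symm_apply]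
  have hne : z - s ≠ 0 := sub_ne_zero.2 (sub_ne_zero.1 (ofReal_sub_ne_zero hz s)).symm
  have hderiv : HasDerivAt (fun ζ : ℂ ↦ -(2 * I / π) * ζ⁻¹) (-(2 * I / π) * -((z - s) ^ 2)⁻¹)
      (equivRealProdCLM.symm (z.re - s, z.im)) := by
    rw [hpoint]
    exact (hasDerivAt_inv hne).const_mul _
  rw [funext gker_eq_re, fderiv_re_comp_symm_apply hderiv.differentiableAt, hderiv.deriv,
    sub_sq_comm]
  ring_nf

theorem symm_integral_Gker (hf : PoissonIntegrable f) {z : ℂ} (hz : z.im ≠ 0) :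
    equivRealProdCLM.symm (∫ t, Gker t z.im (f (z.re - t))) =
      poissonIntegral (fun s ↦ equivRealProdCLM.symm (f s)) z +
        π⁻¹ • (z.im * conj (∫ s : ℝ, (((s : ℂ) - z) ^ 2)⁻¹ • equivRealProdCLM.symm (f s))) := by
  have hω := hf.symm_comp
  have hpoisson := integrable_poissonKernel_smul hω hz
  have hconj : Integrable fun s : ℝ ↦
      z.im * conj ((((s : ℂ) - z) ^ 2)⁻¹ * equivRealProdCLM.symm (f s)) :=
    ((conjCLE : ℂ →L[ℝ] ℂ).integrable_comp (integrable_inv_sq_smul hω hz)).const_mul (z.im : ℂ)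
  rw [← integral_sub_left_eq_self _ _ z.re, ← ContinuousLinearEquiv.integral_comp_comm]
  simp only [sub_sub_cancel, symm_Gker]
  rw [integral_smul, integral_add hpoisson hconj, smul_add, integral_const_mul, integral_conj]
  rfl

theorem integral_Gker_eq_bianalyticField (hf : PoissonIntegrable f) {y : ℝ × ℝ} (hy : y.2 ≠ 0) :
    ∫ t, Gker t y.2 (f (y.1 - t)) =
      bianalyticField (cauchyTransform fun s ↦ equivRealProdCLM.symm (f s))
        (cauchyTransform fun s ↦ conj (equivRealProdCLM.symm (f s)))
        ((2 * I) • deriv (cauchyTransform fun s ↦ equivRealProdCLM.symm (f s))) y := by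
  have hω := hf.symm_comp
  have hz : (equivRealProdCLM.symm y).im ≠ 0 := hy
  have hcoeff : 2 * I * (2 * π * I : ℂ)⁻¹ = (π⁻¹ : ℝ) := by
    push_cast
    field_simp [I_ne_zero]
  rw [bianalyticField, Pi.smul_apply, (hasDerivAt_cauchyTransform hω hz).deriv,
    cauchyTransform_add_conj_eq_poissonIntegral hω hz, ← equivRealProdCLM.symm_apply_eq]
  refine (symm_integral_Gker hf hz).trans ?_
  rw [smul_smul, smul_eq_mul (_ * _), hcoeff, map_mul, conj_ofReal, real_smul, mul_left_comm]
  rfl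

theorem integral_fderiv_gker_eq_re (hf : PoissonIntegrable f) {y : ℝ × ℝ} (hy : y.2 ≠ 0) :
    ∫ t, fderiv ℝ gker (t, y.2) (f (y.1 - t)) =
      (((-4 : ℂ) • deriv (cauchyTransform fun s ↦ equivRealProdCLM.symm (f s)))
        (equivRealProdCLM.symm y)).re := by
  have hω := hf.symm_comp
  have hz : (equivRealProdCLM.symm y).im ≠ 0 := hy
  have hcoeff : -4 * (2 * π * I : ℂ)⁻¹ = 2 * I / π := by
    field_simp
    linear_combination -4 * I_sq
  rw [Pi.smul_apply, (hasDerivAt_cauchyTransform hω hz).deriv, smul_smul, hcoeff, smul_eq_mul,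
    ← integral_const_mul, ← integral_sub_left_eq_self _ _ y.1]
  refine Eq.trans ?_ (integral_re ((integrable_inv_sq_smul hω hz).const_mul (2 * I / π)))
  simp only [sub_sub_cancel]
  exact integral_congr_ae (.of_forall fun s ↦ fderiv_gker_apply hz s (f s))

theorem tendsto_integral_Gker (hf : PoissonIntegrable f) {x : ℝ} (hx : ContinuousAt f x) :
    Tendsto (fun y ↦ ∫ t, Gker t y (f (x - t))) (𝓝[>] 0) (𝓝 (f x)) := by
  have hω := hf.symm_comp
  have hωx : ContinuousAt (fun s ↦ equivRealProdCLM.symm (f s)) x :=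
    equivRealProdCLM.symm.continuous.continuousAt.comp hx
  have hdefect : Tendsto (fun y : ℝ ↦ π⁻¹ • (y * conj (∫ s : ℝ,
      (((s : ℂ) - ⟨x, y⟩) ^ 2)⁻¹ • equivRealProdCLM.symm (f s)))) (𝓝[>] 0) (𝓝 0) := by
    have h := (continuous_conj.tendsto' 0 0 (map_zero _)).comp
      (tendsto_im_smul_integral_inv_sq_smul hω hωx)
    simpa using h.const_smul π⁻¹
  have hlim := (equivRealProdCLM.continuous.tendsto _).comp
    ((tendsto_poissonIntegral hω hωx).add hdefect)
  rw [add_zero, equivRealProdCLM.apply_symm_apply] at hlim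
  refine hlim.congr' (eventually_mem_nhdsWithin.mono fun y (hy : 0 < y) ↦ ?_)
  exact (equivRealProdCLM.symm_apply_eq.1 (symm_integral_Gker hf (z := ⟨x, y⟩) hy.ne')).symm

end HalfPlaneKernels

theorem stmt12_general (v₀ : ℝ → ℝ × ℝ) (hv₀ : PoissonIntegrable v₀)
    (v : ℝ × ℝ → ℝ × ℝ) (hv : ∀ y : ℝ × ℝ, v y = ∫ t : ℝ, Gker t y.2 (v₀ (y.1 - t)))
    (q : ℝ × ℝ → ℝ)
    (hq : ∀ y : ℝ × ℝ, q y = ∫ t : ℝ, fderiv ℝ gker (t, y.2) (v₀ (y.1 - t))) :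
    ContDiffOn ℝ (⊤ : ℕ∞) v {y : ℝ × ℝ | 0 < y.2} ∧
    ContDiffOn ℝ (⊤ : ℕ∞) q {y : ℝ × ℝ | 0 < y.2} ∧
    (∀ y : ℝ × ℝ, 0 < y.2 →
      -(pd1 (pd1 v) y + pd2 (pd2 v) y) + (pd1 q y, pd2 q y) = 0 ∧
      (pd1 v y).1 + (pd2 v y).2 = 0) ∧
    (∀ y₁ : ℝ, ContinuousAt v₀ y₁ →
      Tendsto (fun y₂ : ℝ => v (y₁, y₂)) (nhdsWithin 0 (Set.Ioi 0)) (nhds (v₀ y₁))) := by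
  have hω := hv₀.symm_comp
  have hA {y : ℝ × ℝ} (hy : 0 < y.2) :=
    analyticAt_cauchyTransform hω (z := equivRealProdCLM.symm y) hy.ne'
  have hB {y : ℝ × ℝ} (hy : 0 < y.2) :=
    analyticAt_cauchyTransform hω.conj_comp (z := equivRealProdCLM.symm y) hy.ne'
  have hpos {y : ℝ × ℝ} (hy : 0 < y.2) : ∀ᶠ x : ℝ × ℝ in 𝓝 y, 0 < x.2 :=
    continuous_snd.continuousAt.eventually_const_lt hy
  have hvA {y : ℝ × ℝ} (hy : 0 < y.2) := (hpos hy).mono fun x hx ↦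
    (hv x).trans (integral_Gker_eq_bianalyticField hv₀ hx.ne')
  have hqA {y : ℝ × ℝ} (hy : 0 < y.2) := (hpos hy).mono fun x hx ↦
    (hq x).trans (integral_fderiv_gker_eq_re hv₀ hx.ne')
  refine ⟨fun y hy ↦ ?_, fun y hy ↦ ?_, fun y hy ↦ ?_, fun x hx ↦ ?_⟩
  · refine (ContDiffAt.congr_of_eventuallyEq ?_ (hvA hy)).contDiffWithinAt
    exact contDiffAt_bianalyticField (hA hy) (hB hy) (hA hy).deriv.const_smul
  · refine (ContDiffAt.congr_of_eventuallyEq ?_ (hqA hy)).contDiffWithinAt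
    exact contDiffAt_re_comp_symm (hA hy).deriv.const_smul
  · exact stokes_of_eventuallyEq_bianalyticField (hA hy) (hB hy) (hvA hy) (hqA hy)
  · simpa only [hv] using tendsto_integral_Gker hv₀ hx

end StokesHalfPlane

/-- For bounded continuous boundary data `v₀`, the fields
`v(y) = ∫_ℝ G(t,y₂) v₀(y₁−t) dt` and `q(y) = ∫_ℝ ∇g(t,y₂)·v₀(y₁−t) dt` are smooth on the
open upper half-plane, solve the Stokes equations `−Δv + ∇q = 0`, `div v = 0` there, and
`v(y₁,y₂) → v₀(y₁)` as `y₂ → 0⁺` for every `y₁`. -/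
theorem stmt12 (v₀ : ℝ → ℝ × ℝ) (hcont : Continuous v₀)
    (hbd : ∃ C : ℝ, ∀ t, ‖v₀ t‖ ≤ C)
    (v : ℝ × ℝ → ℝ × ℝ) (hv : ∀ y : ℝ × ℝ, v y = ∫ t : ℝ, Gker t y.2 (v₀ (y.1 - t)))
    (q : ℝ × ℝ → ℝ)
    (hq : ∀ y : ℝ × ℝ, q y = ∫ t : ℝ, fderiv ℝ gker (t, y.2) (v₀ (y.1 - t))) :
    ContDiffOn ℝ (⊤ : ℕ∞) v {y : ℝ × ℝ | 0 < y.2} ∧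
    ContDiffOn ℝ (⊤ : ℕ∞) q {y : ℝ × ℝ | 0 < y.2} ∧
    (∀ y : ℝ × ℝ, 0 < y.2 →
      -(pd1 (pd1 v) y + pd2 (pd2 v) y) + (pd1 q y, pd2 q y) = 0 ∧
      (pd1 v y).1 + (pd2 v y).2 = 0) ∧
    (∀ y₁ : ℝ, Tendsto (fun y₂ : ℝ => v (y₁, y₂)) (nhdsWithin 0 (Set.Ioi 0))
      (nhds (v₀ y₁))) := by
  obtain ⟨C, hC⟩ := hbd
  obtain ⟨hv_smooth, hq_smooth, hstokes, hlim⟩ := stmt12_general v₀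
    (poissonIntegrable_of_norm_le hcont.aestronglyMeasurable hC) v hv q hq
  exact ⟨hv_smooth, hq_smooth, hstokes, fun y₁ ↦ hlim y₁ hcont.continuousAt⟩
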